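/- arXiv:2505.03922 — 4 statements merged into one kernel-verified Lean document; each statement's English description precedes it below -/
import Mathlib

section
/- Let X be the standard simplex in ℝⁿ and let A : X → ℝ^{n×n} be a continuous map such that for every x ∈ X the matrix A(x) has nonnegative off-diagonal entries and each of its columns sums to zero. Then there exists a point x* ∈ X such that A(x*)·x* = 0, i.e., the state-dependent dynamics ẋ = A(x)x admits an equilibrium in the simplex. -/
lemma sperner_local {U I : Type} [DecidableEq U] [Fintype I] [DecidableEq I]
    (c : U → I) (i0 : I) (S : Finset U) (hS : S.card = Fintype.card I) :
    Odd (S.filter (fun x => Finset.univ.erase i0 ⊆ (S.erase x).image c)).card ↔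
      S.image c = Finset.univ := by
  constructor
  · intro hodd
    by_contra hfull
    have hne : (S.filter (fun x => Finset.univ.erase i0 ⊆ (S.erase x).image c)).Nonempty := by
      rw [← Finset.card_pos]; exact hodd.pos
    obtain ⟨x, hx⟩ := hne
    rw [Finset.mem_filter] at hx
    obtain ⟨hxS, hx⟩ := hx
    have hcard : (S.erase x).card = (Finset.univ.erase i0).card := by
      rw [Finset.card_erase_of_mem hxS, Finset.card_erase_of_mem (Finset.mem_univ _), hS,
        Finset.card_univ]
    have himg : Finset.univ.erase i0 = (S.erase x).image c :=
      Finset.eq_of_subset_of_card_le hx (Finset.card_image_le.trans hcard.le)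
    have hinj : Set.InjOn c (S.erase x : Finset U) := by
      rw [← Finset.card_image_iff, ← himg, hcard]
    have hcx : c x ≠ i0 := by
      intro h
      apply hfull
      rw [← Finset.insert_erase hxS, Finset.image_insert, ← himg, h,
        Finset.insert_erase (Finset.mem_univ _)]
    have hcx' : c x ∈ (S.erase x).image c := by rw [← himg]; simp [hcx]
    obtain ⟨x', hx', hxx'⟩ := Finset.mem_image.1 hcx'
    have hpair : S.filter (fun x => Finset.univ.erase i0 ⊆ (S.erase x).image c) = {x, x'} := by
      ext z
      rw [Finset.mem_filter, Finset.mem_insert, Finset.mem_singleton]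
      constructor
      · rintro ⟨hzS, hz⟩
        by_contra hcon
        push Not at hcon
        have hzE : z ∈ S.erase x := Finset.mem_erase.2 ⟨hcon.1, hzS⟩
        have : c z ∈ (S.erase z).image c := by
          apply hz; rw [himg]; exact Finset.mem_image_of_mem _ hzE
        obtain ⟨w, hw, hwz⟩ := Finset.mem_image.1 this
        rw [Finset.mem_erase] at hw
        by_cases hwx : w = x
        · subst hwx
          exact hcon.2 (hinj hzE hx' (by rw [← hwz, hxx']))
        · exact hw.1 (hinj (Finset.mem_erase.2 ⟨hwx, hw.2⟩) hzE hwz)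
      · rintro (rfl | rfl)
        · exact ⟨hxS, hx⟩
        · refine ⟨Finset.mem_of_mem_erase hx', ?_⟩
          intro k hk
          obtain ⟨w, hw, rfl⟩ := Finset.mem_image.1 (hx hk)
          by_cases hwz : w = z
          · subst hwz
            exact Finset.mem_image.2 ⟨x, Finset.mem_erase.2 ⟨(Finset.ne_of_mem_erase hx').symm, hxS⟩,
              hxx'.symm⟩
          · exact Finset.mem_image_of_mem _
              (Finset.mem_erase.2 ⟨hwz, Finset.mem_of_mem_erase hw⟩)
    rw [hpair, Finset.card_pair (Finset.ne_of_mem_erase hx').symm] at hodd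
    exact absurd hodd (by decide)
  · intro hfull
    have hinj : Set.InjOn c S := by
      rw [← Finset.card_image_iff, hfull, hS, Finset.card_univ]
    obtain ⟨x, hxS, hx⟩ := Finset.mem_image.1 (hfull ▸ Finset.mem_univ i0 : i0 ∈ S.image c)
    have : S.filter (fun x => Finset.univ.erase i0 ⊆ (S.erase x).image c) = {x} := by
      ext z
      rw [Finset.mem_filter, Finset.mem_singleton]
      constructor
      · rintro ⟨hzS, hz⟩
        by_contra hzx
        have : c z ∈ (S.erase z).image c := by
          apply hz
          refine Finset.mem_erase.2 ⟨fun h => hzx (hinj hzS hxS (h.trans hx.symm)),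
            Finset.mem_univ _⟩
        obtain ⟨w, hw, hwz⟩ := Finset.mem_image.1 this
        rw [Finset.mem_erase] at hw
        exact hw.1 (hinj hw.2 hzS hwz)
      · rintro rfl
        refine ⟨hxS, ?_⟩
        intro k hk
        have hk' : k ∈ S.image c := hfull ▸ Finset.mem_univ k
        obtain ⟨w, hw, rfl⟩ := Finset.mem_image.1 hk'
        refine Finset.mem_image_of_mem _ (Finset.mem_erase.2 ⟨?_, hw⟩)
        rintro rfl
        exact Finset.ne_of_mem_erase hk hx
    rw [this]; simp

lemma sperner_cycle {U I : Type} [Fintype U] [DecidableEq U] [Fintype I] [DecidableEq I]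
    [Nonempty I] (c : U → I) (F : Finset (Finset U)) (hF : ∀ S ∈ F, S.card = Fintype.card I)
    (heven : ∀ D : Finset U, D.card + 1 = Fintype.card I →
      Even (Finset.univ.filter (fun y => y ∉ D ∧ insert y D ∈ F)).card) :
    Even (F.filter (fun S => S.image c = Finset.univ)).card := by
  obtain ⟨i0⟩ := ‹Nonempty I›
  have h1 : ∑ S ∈ F, (S.filter (fun x => Finset.univ.erase i0 ⊆ (S.erase x).image c)).card
      = ∑ D ∈ Finset.univ.filter (fun D : Finset U => D.card + 1 = Fintype.card I ∧
          Finset.univ.erase i0 ⊆ D.image c),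
        (Finset.univ.filter (fun y => y ∉ D ∧ insert y D ∈ F)).card := by
    rw [← Finset.card_sigma, ← Finset.card_sigma]
    refine Finset.card_bij' (fun p _ => ⟨p.1.erase p.2, p.2⟩) (fun p _ => ⟨insert p.2 p.1, p.2⟩)
      ?_ ?_ ?_ ?_
    · rintro ⟨S, x⟩ h
      simp only [Finset.mem_sigma, Finset.mem_filter, Finset.mem_univ, true_and] at h ⊢
      obtain ⟨hS, hx, h⟩ := h
      refine ⟨⟨?_, h⟩, Finset.notMem_erase _ _, ?_⟩
      · rw [Finset.card_erase_add_one hx, hF S hS]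
      · rwa [Finset.insert_erase hx]
    · rintro ⟨D, x⟩ h
      simp only [Finset.mem_sigma, Finset.mem_filter, Finset.mem_univ, true_and] at h ⊢
      obtain ⟨⟨hD, h⟩, hx, hi⟩ := h
      refine ⟨hi, Finset.mem_insert_self _ _, ?_⟩
      rwa [Finset.erase_insert hx]
    · rintro ⟨S, x⟩ h
      simp only [Finset.mem_sigma, Finset.mem_filter] at h
      simp [Finset.insert_erase h.2.1]
    · rintro ⟨D, x⟩ h
      simp only [Finset.mem_sigma, Finset.mem_filter] at h
      simp [Finset.erase_insert h.2.2.1]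
  have h2 : Even (∑ S ∈ F,
      (S.filter (fun x => Finset.univ.erase i0 ⊆ (S.erase x).image c)).card) := by
    rw [h1]
    refine Finset.even_sum _ fun D hD => heven D (Finset.mem_filter.1 hD).2.1
  rw [Finset.even_sum_iff_even_card_odd] at h2
  rwa [Finset.filter_congr (fun S hS => sperner_local c i0 S (hF S hS))] at h2

def SDom {U I : Type} (ρ : I → U → ℕ) (S : Finset U) : Prop :=
  ∀ z, ∃ i, ∀ x ∈ S, ρ i z ≤ ρ i x

/-- the door lemma -/
lemma door_even {U I : Type} [Fintype U] [DecidableEq U] [Fintype I] [DecidableEq I]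
    (ρ : I → U → ℕ) (hρ : ∀ i, Function.Injective (ρ i)) (D : Finset U) (hne : D.Nonempty)
    (hD : D.card + 1 = Fintype.card I)
    (hY : ∀ j k, k ≠ j → (∀ x, (∀ d ∈ D, ρ j x ≤ ρ j d) → x ∈ D → ∀ d ∈ D, ρ k x ≤ ρ k d) →
      ∃ y, ∀ i, i ≠ j → ∃ d ∈ D, ρ i d < ρ i y)
    (P : U → Prop) [DecidablePred P] (hP : ∀ y, P y ↔ y ∉ D ∧ SDom ρ (insert y D)) :
    Even (Finset.univ.filter P).card := by
  by_cases hdom : SDom ρ D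
  swap
  · have : Finset.univ.filter P = ∅ := by
      ext y
      simp only [Finset.mem_filter, Finset.mem_univ, true_and, Finset.notMem_empty, iff_false, hP]
      rintro ⟨-, h⟩
      apply hdom
      intro z
      obtain ⟨i, hi⟩ := h z
      exact ⟨i, fun x hx => hi x (Finset.mem_insert_of_mem hx)⟩
    rw [this]; simp
  have ha : ∀ i, ∃ a ∈ D, ∀ d ∈ D, ρ i a ≤ ρ i d := fun i => Finset.exists_min_image D (ρ i) hne
  choose a haD hamin using ha
  have hau : ∀ i x, x ∈ D → (∀ d ∈ D, ρ i x ≤ ρ i d) → x = a i := fun i x hx h =>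
    hρ i (le_antisymm (h _ (haD i)) (hamin i x hx))
  obtain ⟨i1, -, i2, -, h12, ha12⟩ : ∃ i1 ∈ Finset.univ, ∃ i2 ∈ Finset.univ, i1 ≠ i2 ∧ a i1 = a i2 :=
    Finset.exists_ne_map_eq_of_card_lt_of_maps_to (t := D) (by rw [Finset.card_univ]; omega)
      (fun i _ => haD i)
  -- maximal elements
  have key : ∀ j k, k ≠ j → a j = a k → ∃ y, (∀ i, i ≠ j → ρ i (a i) < ρ i y) ∧
      (∀ z, (∀ i, i ≠ j → ρ i (a i) < ρ i z) → ρ j z ≤ ρ j y) ∧ ρ j y < ρ j (a j) ∧ P y := by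
    intro j k hkj hjk
    have hYne : (Finset.univ.filter (fun y => ∀ i, i ≠ j → ρ i (a i) < ρ i y)).Nonempty := by
      obtain ⟨y, hy⟩ := hY j k hkj (by
        intro x hx hxD d hd
        rw [hau j x hxD hx, hjk]; exact hamin k d hd)
      refine ⟨y, Finset.mem_filter.2 ⟨Finset.mem_univ _, fun i hi => ?_⟩⟩
      obtain ⟨d, hd, hdy⟩ := hy i hi
      exact (hamin i d hd).trans_lt hdy
    obtain ⟨y, hy, hmax⟩ := Finset.exists_max_image _ (ρ j) hYne
    simp only [Finset.mem_filter, Finset.mem_univ, true_and] at hy hmax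
    have hyj : ∀ d ∈ D, ρ j y ≤ ρ j d := by
      obtain ⟨i, hi⟩ := hdom y
      by_cases hij : i = j
      · subst hij; exact hi
      · exact absurd (hi _ (haD i)) (not_le.2 (hy i hij))
    have hyD : y ∉ D := by
      intro h
      have := hau j y h hyj
      have h2 := hy k hkj
      rw [this, hjk] at h2
      exact lt_irrefl _ h2
    have hlt : ρ j y < ρ j (a j) := by
      refine lt_of_le_of_ne (hyj _ (haD j)) fun h => hyD ?_
      rw [hρ j h]; exact haD j
    refine ⟨y, hy, hmax, hlt, (hP y).2 ⟨hyD, ?_⟩⟩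
    intro z
    by_contra hcon
    push Not at hcon
    have hz : ∀ i, i ≠ j → ρ i (a i) < ρ i z := by
      intro i hi
      obtain ⟨x, hx, hxz⟩ := hcon i
      rcases Finset.mem_insert.1 hx with rfl | hx
      · exact (hy i hi).trans hxz
      · exact (hamin i x hx).trans_lt hxz
    have h1 := hmax z hz
    obtain ⟨x, hx, hxz⟩ := hcon j
    rcases Finset.mem_insert.1 hx with rfl | hx
    · omega
    · have := hamin j x hx; omega
  obtain ⟨y1, hy1, hm1, hl1, hP1⟩ := key i1 i2 h12.symm ha12
  obtain ⟨y2, hy2, hm2, hl2, hP2⟩ := key i2 i1 h12 ha12.symm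
  have hne12 : y1 ≠ y2 := by
    rintro rfl
    have := hy2 i1 h12
    omega
  have : Finset.univ.filter P = {y1, y2} := by
    ext y
    simp only [Finset.mem_filter, Finset.mem_univ, true_and, Finset.mem_insert,
      Finset.mem_singleton]
    constructor
    swap
    · rintro (rfl | rfl) <;> assumption
    intro hPy
    obtain ⟨hyD, hy⟩ := (hP y).1 hPy
    obtain ⟨j, hj⟩ := hy y
    have hsurj : ∀ d ∈ D, ∃ i, i ≠ j ∧ a i = d ∧ ρ i d < ρ i y := by
      intro d hd
      obtain ⟨i, hi⟩ := hy d
      have hdy : ρ i d < ρ i y := by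
        refine lt_of_le_of_ne (hi y (Finset.mem_insert_self _ _)) fun h => hyD ?_
        rw [← hρ i h]; exact hd
      refine ⟨i, ?_, (hau i d hd fun x hx => hi x (Finset.mem_insert_of_mem hx)).symm, hdy⟩
      rintro rfl
      have := hj d (Finset.mem_insert_of_mem hd)
      omega
    have himg : (Finset.univ.erase j).image a = D := by
      ext d
      simp only [Finset.mem_image, Finset.mem_erase, Finset.mem_univ, and_true]
      constructor
      · rintro ⟨i, -, rfl⟩; exact haD i
      · intro hd
        obtain ⟨i, hi, h, -⟩ := hsurj d hd
        exact ⟨i, hi, h⟩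
    have hinj : Set.InjOn a (Finset.univ.erase j : Finset I) := by
      rw [← Finset.card_image_iff, himg, Finset.card_erase_of_mem (Finset.mem_univ _),
        Finset.card_univ]
      omega
    have hyY : ∀ i, i ≠ j → ρ i (a i) < ρ i y := by
      intro i hi
      obtain ⟨i', hi', h, hlt⟩ := hsurj (a i) (haD i)
      have : i' = i := hinj (by simp [hi']) (by simp [hi]) h
      subst this
      exact hlt
    have hymax : ∀ z, (∀ i, i ≠ j → ρ i (a i) < ρ i z) → ρ j z ≤ ρ j y := by
      intro z hz
      obtain ⟨i, hi⟩ := hy z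
      by_cases hij : i = j
      · subst hij; exact hi y (Finset.mem_insert_self _ _)
      · exact absurd (hi _ (Finset.mem_insert_of_mem (haD i))) (not_le.2 (hz i hij))
    have hj12 : j = i1 ∨ j = i2 := by
      by_contra hcon
      push Not at hcon
      exact h12 (hinj (by simp [hcon.1.symm]) (by simp [hcon.2.symm]) ha12)
    rcases hj12 with rfl | rfl
    · left; exact hρ j (le_antisymm (hm1 y hyY) (hymax y1 hy1))
    · right; exact hρ j (le_antisymm (hm2 y hyY) (hymax y2 hy2))
  rw [this, Finset.card_pair hne12]
  exact even_two

open Classical in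
lemma scarf {T I : Type} [Fintype T] [Fintype I] [Nonempty T] [Nonempty I]
    (ρ : I → T ⊕ I → ℕ) (hρ : ∀ i, Function.Injective (ρ i))
    (hbot : ∀ i x, ρ i (Sum.inr i) ≤ ρ i x)
    (htop : ∀ i j x, j ≠ i → ρ i (Sum.inl x) < ρ i (Sum.inr j)) (c : T → I) :
    ∃ (σ : Finset T) (C : Finset I), σ.Nonempty ∧ (∀ i ∈ C, ∃ x ∈ σ, c x = i) ∧
      ∀ z, ∃ i ∈ C, ∀ x ∈ σ, ρ i (Sum.inl z) ≤ ρ i (Sum.inl x) := by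
  let cc : T ⊕ I → I := Sum.elim c id
  let B : Finset (T ⊕ I) := Finset.univ.image Sum.inr
  have hBc : B.card = Fintype.card I := by
    rw [Finset.card_image_of_injective _ Sum.inr_injective, Finset.card_univ]
  have hBmem : ∀ j, Sum.inr j ∈ B := fun j => Finset.mem_image_of_mem _ (Finset.mem_univ _)
  have hBnot : ∀ x, Sum.inl x ∉ B := fun x => by simp [B]
  let F : Finset (Finset (T ⊕ I)) :=
    Finset.univ.filter (fun S => S.card = Fintype.card I ∧ (SDom ρ S ∨ S = B))
  have hmemF : ∀ S, S ∈ F ↔ S.card = Fintype.card I ∧ (SDom ρ S ∨ S = B) := by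
    intro S; simp [F]
  have hE : Even (F.filter (fun S => S.image cc = Finset.univ)).card := by
    apply sperner_cycle cc F (fun S hS => ((hmemF S).1 hS).1)
    intro D hD
    by_cases hDB : D ⊆ B
    · -- boundary door
      obtain ⟨k, hk⟩ : ∃ k, Sum.inr k ∉ D := by
        by_contra hcon
        push Not at hcon
        have : B ⊆ D := by
          intro x hx
          obtain ⟨j, -, rfl⟩ := Finset.mem_image.1 hx
          exact hcon j
        have := Finset.card_le_card this
        omega
      have hins : insert (Sum.inr k) D = B := by
        apply Finset.eq_of_subset_of_card_le
        · exact Finset.insert_subset (hBmem k) hDB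
        · rw [Finset.card_insert_of_notMem hk, hBc, hD]
      have hinD : ∀ j, j ≠ k → Sum.inr j ∈ D := by
        intro j hj
        have := hBmem j
        rw [← hins, Finset.mem_insert] at this
        rcases this with h | h
        · exact absurd (Sum.inr_injective h) hj
        · exact h
      obtain ⟨m, -, hm⟩ := Finset.exists_max_image (Finset.univ : Finset T)
        (fun x => ρ k (Sum.inl x)) Finset.univ_nonempty
      have hmD : Sum.inl m ∉ D := fun h => hBnot m (hDB h)
      have : Finset.univ.filter (fun y => y ∉ D ∧ insert y D ∈ F)
          = {Sum.inr k, Sum.inl m} := by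
        ext y
        simp only [Finset.mem_filter, Finset.mem_univ, true_and, Finset.mem_insert,
          Finset.mem_singleton]
        constructor
        · rintro ⟨hyD, hyF⟩
          rcases y with x | j
          · right
            have hd : SDom ρ (insert (Sum.inl x) D) := by
              rcases ((hmemF _).1 hyF).2 with h | h
              · exact h
              · exact absurd (h ▸ Finset.mem_insert_self _ _) (hBnot x)
            obtain ⟨i, hi⟩ := hd (Sum.inl m)
            have hik : i = k := by
              by_contra hik
              have h1 := hi _ (Finset.mem_insert_of_mem (hinD i hik))
              have h2 := hbot i (Sum.inl m)
              exact absurd (hρ i (le_antisymm h1 h2)) (by simp)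
            subst hik
            have h1 := hi _ (Finset.mem_insert_self _ _)
            exact hρ i (le_antisymm (hm x (Finset.mem_univ _)) h1)
          · left
            by_contra hj
            exact hyD (hinD j (fun h => hj (by rw [h])))
        · rintro (rfl | rfl)
          · exact ⟨hk, (hmemF _).2 ⟨by rw [hins, hBc], Or.inr hins⟩⟩
          · refine ⟨hmD, (hmemF _).2 ⟨by rw [Finset.card_insert_of_notMem hmD, hD], Or.inl ?_⟩⟩
            intro z
            rcases z with z | j
            · refine ⟨k, fun x hx => ?_⟩
              rcases Finset.mem_insert.1 hx with rfl | hx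
              · exact hm z (Finset.mem_univ _)
              · obtain ⟨j, -, rfl⟩ := Finset.mem_image.1 (hDB hx)
                exact (htop k j z (fun h => hk (h ▸ hx))).le
            · exact ⟨j, fun x _ => hbot j x⟩
      rw [this, Finset.card_pair (by simp)]
      exact even_two
    · obtain ⟨x0, hx0, hx0B⟩ := Finset.not_subset.1 hDB
      obtain ⟨t, rfl⟩ : ∃ t, x0 = Sum.inl t := by
        rcases x0 with t | j
        · exact ⟨t, rfl⟩
        · exact absurd (hBmem j) hx0B
      apply door_even ρ hρ D ⟨_, hx0⟩ hD
      · intro j k hkj h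
        refine ⟨Sum.inr j, fun i hi => ⟨Sum.inl t, hx0, htop i j t hi.symm⟩⟩
      · intro y
        rw [hmemF]
        constructor
        · rintro ⟨h1, -, h2 | h2⟩
          · exact ⟨h1, h2⟩
          · exact absurd (h2 ▸ Finset.mem_insert_of_mem hx0) hx0B
        · rintro ⟨h1, h2⟩
          exact ⟨h1, by rw [Finset.card_insert_of_notMem h1, hD], Or.inl h2⟩
  have hBF : B ∈ F.filter (fun S => S.image cc = Finset.univ) := by
    refine Finset.mem_filter.2 ⟨(hmemF B).2 ⟨hBc, Or.inr rfl⟩, ?_⟩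
    ext i
    simp only [Finset.mem_univ, iff_true]
    exact Finset.mem_image.2 ⟨_, hBmem i, rfl⟩
  have hgt : 1 < (F.filter (fun S => S.image cc = Finset.univ)).card := by
    have := Finset.card_pos.2 ⟨B, hBF⟩
    obtain ⟨q, hq⟩ := hE
    omega
  obtain ⟨S, hS, hSB⟩ := Finset.exists_mem_ne hgt B
  obtain ⟨hSF, hSc⟩ := Finset.mem_filter.1 hS
  obtain ⟨hcard, hd⟩ := (hmemF S).1 hSF
  have hd : SDom ρ S := hd.resolve_right hSB
  refine ⟨Finset.univ.filter (fun x => Sum.inl x ∈ S),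
    Finset.univ.filter (fun i => Sum.inr i ∉ S), ?_, ?_, ?_⟩
  · by_contra hcon
    apply hSB
    apply Finset.eq_of_subset_of_card_le _ (by rw [hBc, hcard])
    intro x hx
    rcases x with x | j
    · exact absurd ⟨x, by simpa using hx⟩ hcon
    · exact hBmem j
  · intro i hi
    have hi : Sum.inr i ∉ S := by simpa using hi
    have : i ∈ S.image cc := hSc ▸ Finset.mem_univ i
    obtain ⟨x, hx, hxi⟩ := Finset.mem_image.1 this
    rcases x with x | j
    · exact ⟨x, by simpa using hx, hxi⟩
    · have : j = i := hxi
      subst this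
      exact absurd hx hi
  · intro z
    obtain ⟨i, hi⟩ := hd (Sum.inl z)
    refine ⟨i, ?_, fun x hx => hi _ (by simpa using hx)⟩
    simp only [Finset.mem_filter, Finset.mem_univ, true_and]
    intro h
    exact absurd (hρ i (le_antisymm (hi _ h) (hbot i _))) (by simp)

/-- version with weak ranks -/
lemma scarf_weak {T I : Type} [Fintype T] [Fintype I] [Nonempty T] [Nonempty I]
    (r : I → T → ℕ) (c : T → I) :
    ∃ (σ : Finset T) (C : Finset I), σ.Nonempty ∧ (∀ i ∈ C, ∃ x ∈ σ, c x = i) ∧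
      ∀ z, ∃ i ∈ C, ∀ x ∈ σ, r i z ≤ r i x := by
  classical
  let K := Fintype.card T
  let e := Fintype.equivFin T
  let f := Fintype.equivFin I
  let rr : I → T → ℕ := fun i x => r i x * K + e x
  have hrr : ∀ i x y, r i x < r i y → rr i x < rr i y := by
    intro i x y h
    have h1 : (e x : ℕ) < K := (e x).2
    have h2 : (r i x + 1) * K ≤ r i y * K := Nat.mul_le_mul_right _ h
    simp only [rr]
    nlinarith
  have hinj : ∀ i x y, rr i x = rr i y → x = y := by
    intro i x y h
    rcases lt_trichotomy (r i x) (r i y) with h1 | h1 | h1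
    · have := hrr i x y h1; omega
    · simp only [rr, h1] at h
      exact e.injective (Fin.ext (by omega))
    · have := hrr i y x h1; omega
  let M : ℕ := ∑ i, ∑ x, rr i x
  have hM : ∀ i x, rr i x ≤ M := by
    intro i x
    calc rr i x ≤ ∑ x, rr i x := Finset.single_le_sum (fun _ _ => Nat.zero_le _) (Finset.mem_univ x)
      _ ≤ M := Finset.single_le_sum (f := fun i => ∑ x, rr i x)
        (fun _ _ => Nat.zero_le _) (Finset.mem_univ i)
  let ρ : I → T ⊕ I → ℕ := fun i => Sum.elim (fun x => rr i x + 1)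
    (fun j => if j = i then 0 else M + 2 + f j)
  obtain ⟨σ, C, h1, h2, h3⟩ := scarf ρ (by
      rintro i (x | j) (y | k) h
      · simp only [ρ, Sum.elim_inl] at h
        rw [hinj i x y (by omega)]
      · simp only [ρ, Sum.elim_inl, Sum.elim_inr] at h
        have := hM i x
        split_ifs at h <;> omega
      · simp only [ρ, Sum.elim_inl, Sum.elim_inr] at h
        have := hM i y
        split_ifs at h <;> omega
      · simp only [ρ, Sum.elim_inr] at h
        split_ifs at h with h1 h2 h2
        · rw [h1, h2]
        · omega
        · omega
        · rw [f.injective (Fin.ext (by omega : (f j : ℕ) = f k))])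
    (by intro i x; simp [ρ]) (by
      intro i j x hj
      simp only [ρ, Sum.elim_inl, Sum.elim_inr, if_neg hj]
      have := hM i x
      omega) c
  refine ⟨σ, C, h1, h2, fun z => ?_⟩
  obtain ⟨i, hi, h⟩ := h3 z
  refine ⟨i, hi, fun x hx => ?_⟩
  by_contra hlt
  have h4 := hrr i x z (by omega)
  have h5 := h x hx
  simp only [ρ, Sum.elim_inl] at h5
  omega

/-- grid version -/
lemma scarf_grid (n m : ℕ) (hn : 0 < n) (c : (Fin n → ℕ) → Fin n) :
    ∃ (σ : Finset (Fin n → ℕ)) (C : Finset (Fin n)), σ.Nonempty ∧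
      (∀ x ∈ σ, ∑ i, x i = m) ∧ (∀ i ∈ C, ∃ x ∈ σ, c x = i) ∧
      (∀ x ∈ σ, ∀ i ∉ C, x i ≤ n) ∧ (∀ x ∈ σ, ∀ y ∈ σ, ∀ i, x i ≤ y i + n) := by
  classical
  let G : Finset (Fin n → ℕ) := Finset.piAntidiag Finset.univ m
  have hG : ∀ x, x ∈ G ↔ ∑ i, x i = m := by intro x; simp [G]
  have : Nonempty (Fin n) := ⟨⟨0, hn⟩⟩
  have : Nonempty G := ⟨⟨Pi.single ⟨0, hn⟩ m, by rw [hG]; simp⟩⟩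
  obtain ⟨σ, C, hσ, hc, hd⟩ := scarf_weak (T := G) (fun i x => x.1 i) (fun x => c x.1)
  have hmin : ∀ i, ∃ p ∈ σ, ∀ x ∈ σ, p.1 i ≤ x.1 i := fun i =>
    Finset.exists_min_image σ (fun x => x.1 i) hσ
  choose p hpσ hp using hmin
  have hsum : m < ∑ i ∈ C, ((p i).1 i + 1) := by
    by_contra hcon
    push Not at hcon
    obtain ⟨i0, hi0, -⟩ := hd (p ⟨0, hn⟩)
    let z : Fin n → ℕ := fun i => (if i ∈ C then (p i).1 i + 1 else 0) +
      (if i = i0 then m - ∑ i ∈ C, ((p i).1 i + 1) else 0)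
    have hz : z ∈ G := by
      rw [hG]
      simp only [z, Finset.sum_add_distrib, Finset.sum_ite_mem, Finset.univ_inter,
        Finset.sum_ite_eq', Finset.mem_univ, if_true]
      simp only [Finset.sum_add_distrib] at hcon
      omega
    obtain ⟨i, hi, h⟩ := hd ⟨z, hz⟩
    have := h (p i) (hpσ i)
    simp only [z, if_pos hi] at this
    omega
  have hCn : C.card ≤ n := by simpa using Finset.card_le_univ C
  have hsum' : m < ∑ i ∈ C, (p i).1 i + n := by
    rw [Finset.sum_add_distrib] at hsum
    simp at hsum
    omega
  have hout : ∀ x ∈ σ, ∀ i ∉ C, x.1 i ≤ n := by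
    intro x hx i hi
    have h1 : ∑ k ∈ insert i C, x.1 k ≤ ∑ k, x.1 k :=
      Finset.sum_le_sum_of_subset (Finset.subset_univ _)
    rw [Finset.sum_insert hi, (hG _).1 x.2] at h1
    have h2 : ∑ k ∈ C, (p k).1 k ≤ ∑ k ∈ C, x.1 k := Finset.sum_le_sum fun k _ => hp k x hx
    omega
  have hin : ∀ x ∈ σ, ∀ i ∈ C, x.1 i ≤ (p i).1 i + n := by
    intro x hx i hi
    have h1 : ∑ k ∈ C, x.1 k ≤ ∑ k, x.1 k :=
      Finset.sum_le_sum_of_subset (Finset.subset_univ _)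
    rw [(hG _).1 x.2, ← Finset.add_sum_erase C _ hi] at h1
    have h2 : ∑ k ∈ C.erase i, (p k).1 k ≤ ∑ k ∈ C.erase i, x.1 k :=
      Finset.sum_le_sum fun k _ => hp k x hx
    have h3 := Finset.add_sum_erase C (fun k => (p k).1 k) hi
    omega
  refine ⟨σ.image Subtype.val, C, hσ.image _, ?_, ?_, ?_, ?_⟩
  · intro x hx
    obtain ⟨x, hx', rfl⟩ := Finset.mem_image.1 hx
    exact (hG _).1 x.2
  · intro i hi
    obtain ⟨x, hx, h⟩ := hc i hi
    exact ⟨x.1, Finset.mem_image_of_mem _ hx, h⟩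
  · intro x hx
    obtain ⟨x, hx', rfl⟩ := Finset.mem_image.1 hx
    exact hout x hx'
  · intro x hx y hy i
    obtain ⟨x, hx', rfl⟩ := Finset.mem_image.1 hx
    obtain ⟨y, hy', rfl⟩ := Finset.mem_image.1 hy
    by_cases hi : i ∈ C
    · have h1 := hin x hx' i hi
      have h2 := hp i y hy'
      omega
    · have := hout x hx' i hi
      omega


lemma approx_equilibrium (n : ℕ) (hn : 0 < n)
    (g : (Fin n → ℝ) → (Fin n → ℝ)) (hg : ContinuousOn g (stdSimplex ℝ (Fin n)))
    (M : ℝ) (hM : ∀ x ∈ stdSimplex ℝ (Fin n), ∀ i, -(M * x i) ≤ g x i)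
    (hsum : ∀ x ∈ stdSimplex ℝ (Fin n), ∑ i, g x i = 0) (ε : ℝ) (hε : 0 < ε) :
    ∃ y ∈ stdSimplex ℝ (Fin n), ∀ i, -ε ≤ g y i := by
  classical
  have hne : Nonempty (Fin n) := ⟨⟨0, hn⟩⟩
  have huc := (isCompact_stdSimplex ℝ (Fin n)).uniformContinuousOn_of_continuous hg
  rw [Metric.uniformContinuousOn_iff] at huc
  obtain ⟨δ, hδ, huc⟩ := huc ε hε
  obtain ⟨m, hm⟩ := exists_nat_gt (max 0 (max (n / δ) (|M| * n / ε)))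
  rw [max_lt_iff, max_lt_iff, div_lt_iff₀ hδ, div_lt_iff₀ hε] at hm
  obtain ⟨hm0, hm1, hm2⟩ := hm
  let E : (Fin n → ℕ) → (Fin n → ℝ) := fun v i => (v i : ℝ) / m
  have hE : ∀ v : Fin n → ℕ, ∑ i, v i = m → E v ∈ stdSimplex ℝ (Fin n) := by
    intro v hv
    refine ⟨fun i => by positivity, ?_⟩
    simp only [E]
    rw [← Finset.sum_div, ← Nat.cast_sum, hv, div_self hm0.ne']
  have hcol : ∀ v : Fin n → ℕ, ∃ i, ∑ i, v i = m → 0 ≤ g (E v) i := by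
    intro v
    by_cases hv : ∑ i, v i = m
    · by_contra hcon
      push Not at hcon
      have h1 := hsum _ (hE v hv)
      have h2 : ∑ i, g (E v) i < 0 :=
        Finset.sum_neg (fun i _ => (hcon i).2) Finset.univ_nonempty
      linarith
    · exact ⟨⟨0, hn⟩, fun h => absurd h hv⟩
  choose c hc using hcol
  obtain ⟨σ, C, ⟨y, hy⟩, hs, hcC, hout, hclose⟩ := scarf_grid n m hn c
  have hyX := hE y (hs y hy)
  refine ⟨E y, hyX, fun i => ?_⟩
  by_cases hi : i ∈ C
  · obtain ⟨x, hx, hxi⟩ := hcC i hi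
    have h0 : 0 ≤ g (E x) i := by have := hc x (hs x hx); rwa [hxi] at this
    have hd : dist (E x) (E y) < δ := by
      rw [dist_pi_lt_iff hδ]
      intro k
      have h1 : (x k : ℝ) ≤ y k + n := by exact_mod_cast hclose x hx y hy k
      have h2 : (y k : ℝ) ≤ x k + n := by exact_mod_cast hclose y hy x hx k
      rw [Real.dist_eq]
      simp only [E]
      rw [← sub_div, abs_div, abs_of_pos hm0, div_lt_iff₀ hm0]
      have : |(x k : ℝ) - y k| ≤ n := abs_le.2 ⟨by linarith, by linarith⟩
      linarith
    have h3 := (dist_le_pi_dist _ _ i).trans_lt (huc _ (hE x (hs x hx)) _ hyX hd)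
    rw [Real.dist_eq, abs_lt] at h3
    linarith [h3.2]
  · have h1 : (y i : ℝ) ≤ n := by exact_mod_cast hout y hy i hi
    have h2 := hM _ hyX i
    have h3 : M * E y i ≤ ε := by
      calc M * E y i ≤ |M| * E y i := mul_le_mul_of_nonneg_right (le_abs_self M) (hyX.1 i)
        _ = |M| * y i / m := by simp only [E]; ring
        _ ≤ ε := by
          rw [div_le_iff₀ hm0]
          have := mul_le_mul_of_nonneg_left h1 (abs_nonneg M)
          linarith
    linarith

/-- Existence of an equilibrium of the state-dependent generator dynamics
`ẋ = A(x)x` on the standard simplex: if `A` is continuous on the simplex and,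
for each `x` in the simplex, `A x` has nonnegative off-diagonal entries and
zero column sums, then there is an `x*` in the simplex with `A(x*) x* = 0`. -/
theorem exists_equilibrium_in_stdSimplex
    (n : ℕ) (hn : 0 < n)
    (A : (Fin n → ℝ) → Matrix (Fin n) (Fin n) ℝ)
    (hcont : ContinuousOn A (stdSimplex ℝ (Fin n)))
    (hoff : ∀ x ∈ stdSimplex ℝ (Fin n), ∀ i j, i ≠ j → 0 ≤ A x i j)
    (hcol : ∀ x ∈ stdSimplex ℝ (Fin n), ∀ j, ∑ i, A x i j = 0) :
    ∃ x ∈ stdSimplex ℝ (Fin n), (A x).mulVec x = 0 := by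
  have hne : Nonempty (Fin n) := ⟨⟨0, hn⟩⟩
  have hent : ∀ i j, ContinuousOn (fun x => A x i j) (stdSimplex ℝ (Fin n)) := fun i j =>
    continuousOn_pi.1 (continuousOn_pi.1 hcont i) j
  have hg : ∀ i, ContinuousOn (fun x => (A x).mulVec x i) (stdSimplex ℝ (Fin n)) := by
    intro i
    simp only [Matrix.mulVec, dotProduct]
    exact continuousOn_finsetSum _ fun j _ => (hent i j).mul (continuous_apply j).continuousOn
  have hsum : ∀ x ∈ stdSimplex ℝ (Fin n), ∑ i, (A x).mulVec x i = 0 := by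
    intro x hx
    simp only [Matrix.mulVec, dotProduct]
    rw [Finset.sum_comm]
    refine Finset.sum_eq_zero fun j _ => ?_
    rw [← Finset.sum_mul, hcol x hx j, zero_mul]
  obtain ⟨M, hM⟩ := (isCompact_stdSimplex ℝ (Fin n)).exists_bound_of_continuousOn
    (f := fun x => (fun i => A x i i : Fin n → ℝ)) (continuousOn_pi.2 fun i => hent i i)
  have hlow : ∀ x ∈ stdSimplex ℝ (Fin n), ∀ i, -(M * x i) ≤ (A x).mulVec x i := by
    intro x hx i
    have h1 : |A x i i| ≤ M := (norm_le_pi_norm (fun i => A x i i) i).trans (hM x hx)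
    have h2 : 0 ≤ ∑ j ∈ Finset.univ.erase i, A x i j * x j :=
      Finset.sum_nonneg fun j hj =>
        mul_nonneg (hoff x hx i j (Finset.ne_of_mem_erase hj).symm) (hx.1 j)
    have h3 : -(M * x i) ≤ A x i i * x i := by
      have := mul_le_mul_of_nonneg_right (abs_le.1 h1).1 (hx.1 i)
      linarith
    simp only [Matrix.mulVec, dotProduct]
    rw [← Finset.add_sum_erase _ _ (Finset.mem_univ i)]
    linarith
  have happ := approx_equilibrium n hn (fun x => (A x).mulVec x) (continuousOn_pi.2 hg) M hlow hsum
  obtain ⟨y0, hy0, -⟩ := happ 1 one_pos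
  have hcf : ContinuousOn
      (fun x => Finset.univ.inf' Finset.univ_nonempty (fun i => (A x).mulVec x i))
      (stdSimplex ℝ (Fin n)) := ContinuousOn.finset_inf'_apply _ fun i _ => hg i
  obtain ⟨x, hx, hmax⟩ := (isCompact_stdSimplex ℝ (Fin n)).exists_isMaxOn ⟨y0, hy0⟩ hcf
  have hge : ∀ i, 0 ≤ (A x).mulVec x i := by
    intro i
    refine le_of_forall_pos_le_add fun ε hε => ?_
    obtain ⟨y, hy, hyε⟩ := happ ε hε
    have h1 : -ε ≤ Finset.univ.inf' Finset.univ_nonempty (fun i => (A y).mulVec y i) :=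
      Finset.le_inf' _ _ fun i _ => hyε i
    have h2 := hmax hy
    simp only [Set.mem_ofPred_eq] at h2
    have h3 : Finset.univ.inf' Finset.univ_nonempty (fun i => (A x).mulVec x i)
      ≤ (A x).mulVec x i := Finset.inf'_le _ (Finset.mem_univ i)
    linarith
  refine ⟨x, hx, funext fun i => ?_⟩
  exact (Finset.sum_eq_zero_iff_of_nonneg fun i _ => hge i).1 (hsum x hx) i (Finset.mem_univ i)
end

section
/- Let M₀ and M₁ be real n × n matrices such that for every q ∈ [0,1] the matrix M₀ + q(M₁ − M₀) has nonnegative off-diagonal entries and each of its columns sums to zero, and let q : ℝⁿ → [0,1] be continuous. Then there exists a point x* in the standard simplex of ℝⁿ such that (M₀ + q(x*)(M₁ − M₀))·x* = 0. -/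
open Matrix in
/-- Resolvent equation of a generator matrix preserves nonnegativity and mass. -/
lemma resolvent_mem_simplex {n : ℕ} (hn : 0 < n) (A : Matrix (Fin n) (Fin n) ℝ)
    (hoff : ∀ i j, i ≠ j → 0 ≤ A i j) (hcol : ∀ j, ∑ i, A i j = 0)
    (ε : ℝ) (hε : 0 < ε) (x : Fin n → ℝ)
    (hx : ∀ i, ε * x i - ∑ j, A i j * x j = ε / n) : x ∈ stdSimplex ℝ (Fin n) := by
  have hn' : (0 : ℝ) < n := by exact_mod_cast hn
  constructor
  · by_contra! hneg
    obtain ⟨k, hk⟩ := hneg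
    set N : Finset (Fin n) := Finset.univ.filter (fun i => x i < 0) with hN
    have hkN : k ∈ N := by simp [hN, hk]
    have h1 : ∑ i ∈ N, (ε * x i - ∑ j, A i j * x j) = ∑ i ∈ N, ε / n :=
      Finset.sum_congr rfl (fun i _ => hx i)
    have h2 : 0 ≤ ∑ i ∈ N, ∑ j, A i j * x j := by
      rw [Finset.sum_comm]
      refine Finset.sum_nonneg fun j _ => ?_
      rw [← Finset.sum_mul]
      by_cases hj : x j < 0
      · refine mul_nonneg_of_nonpos_of_nonpos ?_ hj.le
        have h3 := Finset.sum_add_sum_compl N (fun i => A i j)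
        rw [hcol] at h3
        have h4 : 0 ≤ ∑ i ∈ Nᶜ, A i j := by
          refine Finset.sum_nonneg fun i hi => hoff i j ?_
          rintro rfl
          simp [hN] at hi
          linarith
        linarith
      · refine mul_nonneg (Finset.sum_nonneg fun i hi => hoff i j ?_) (not_lt.mp hj)
        rintro rfl
        simp [hN] at hi
        exact hj hi
    have h5 : 0 ≤ ∑ i ∈ N, ε / n := Finset.sum_nonneg fun _ _ => by positivity
    have h6 : ∑ i ∈ N, ε * x i < 0 := by
      refine Finset.sum_neg (fun i hi => ?_) ⟨k, hkN⟩
      simp [hN] at hi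
      exact mul_neg_of_pos_of_neg hε hi
    rw [Finset.sum_sub_distrib] at h1
    linarith
  · have h1 : ∑ i, (ε * x i - ∑ j, A i j * x j) = ∑ i : Fin n, ε / n :=
      Finset.sum_congr rfl (fun i _ => hx i)
    rw [Finset.sum_sub_distrib, Finset.sum_comm] at h1
    simp only [← Finset.sum_mul, hcol, ← Finset.mul_sum] at h1
    simp at h1
    have : (n : ℝ) * (ε / n) = ε := by field_simp
    rw [this] at h1
    exact mul_left_cancel₀ hε.ne' (by linarith)

open Matrix in
lemma resolvent_det_ne_zero {n : ℕ} (A : Matrix (Fin n) (Fin n) ℝ)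
    (hoff : ∀ i j, i ≠ j → 0 ≤ A i j) (hcol : ∀ j, ∑ i, A i j = 0)
    (ε : ℝ) (hε : 0 < ε) : (ε • (1 : Matrix (Fin n) (Fin n) ℝ) - A).det ≠ 0 := by
  apply det_ne_zero_of_sum_col_lt_diag
  intro k
  have h0 : ∑ i ∈ Finset.univ.erase k, ‖(ε • (1 : Matrix (Fin n) (Fin n) ℝ) - A) i k‖
      = ∑ i ∈ Finset.univ.erase k, A i k := by
    refine Finset.sum_congr rfl fun i hi => ?_
    have hik : i ≠ k := Finset.ne_of_mem_erase hi
    simp [Matrix.one_apply_ne hik, abs_of_nonneg (hoff i k hik)]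
  have h1 := Finset.add_sum_erase Finset.univ (fun i => A i k) (Finset.mem_univ k)
  simp only [hcol] at h1
  rw [h0]
  have h2 : (ε • (1 : Matrix (Fin n) (Fin n) ℝ) - A) k k = ε - A k k := by simp
  rw [h2]
  have := le_abs_self (ε - A k k)
  rw [Real.norm_eq_abs]
  linarith

open Matrix in
lemma exists_approx_equilibrium
    (n : ℕ) (hn : 0 < n)
    (M₀ M₁ : Matrix (Fin n) (Fin n) ℝ)
    (hoff : ∀ q ∈ Set.Icc (0 : ℝ) 1, ∀ i j, i ≠ j → 0 ≤ (M₀ + q • (M₁ - M₀)) i j)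
    (hcol : ∀ q ∈ Set.Icc (0 : ℝ) 1, ∀ j, ∑ i, (M₀ + q • (M₁ - M₀)) i j = 0)
    (q : (Fin n → ℝ) → ℝ) (hqcont : Continuous q)
    (hq01 : ∀ x, q x ∈ Set.Icc (0 : ℝ) 1) (ε : ℝ) (hε : 0 < ε) :
    ∃ x ∈ stdSimplex ℝ (Fin n), ‖(M₀ + q x • (M₁ - M₀)).mulVec x‖ ≤ ε := by
  set B : ℝ → Matrix (Fin n) (Fin n) ℝ := fun t => ε • 1 - (M₀ + t • (M₁ - M₀)) with hB
  set b : Fin n → ℝ := fun _ => ε / n with hb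
  set X : ℝ → Fin n → ℝ := fun t => (B t).det⁻¹ • ((B t).adjugate *ᵥ b) with hX
  have hBc : Continuous B := by fun_prop
  have hdet : ∀ t ∈ Set.Icc (0 : ℝ) 1, (B t).det ≠ 0 := fun t ht =>
    resolvent_det_ne_zero _ (hoff t ht) (hcol t ht) ε hε
  have hXc : ContinuousOn X (Set.Icc 0 1) := by
    have h1 : ContinuousOn (fun t => (B t).det⁻¹) (Set.Icc 0 1) :=
      (hBc.matrix_det.continuousOn).inv₀ hdet
    have h2 : ContinuousOn (fun t => (B t).adjugate *ᵥ b) (Set.Icc 0 1) :=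
      (hBc.matrix_adjugate.matrix_mulVec continuous_const).continuousOn
    exact h1.smul h2
  obtain ⟨t, ht, hfix⟩ := exists_mem_Icc_isFixedPt_of_mapsTo
    (hqcont.comp_continuousOn hXc) zero_le_one (fun t _ => hq01 (X t))
  have hfix' : q (X t) = t := hfix
  have hBX : B t *ᵥ X t = b := by
    simp only [hX]
    rw [mulVec_smul, mulVec_mulVec, mul_adjugate, smul_mulVec, one_mulVec, smul_smul,
      inv_mul_cancel₀ (hdet t ht), one_smul]
  have heq : ∀ i, ε * X t i - ((M₀ + t • (M₁ - M₀)) *ᵥ X t) i = ε / n := by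
    intro i
    have := congrFun hBX i
    simp only [hB, sub_mulVec, smul_mulVec, one_mulVec, Pi.sub_apply, Pi.smul_apply,
      smul_eq_mul] at this
    exact this
  have hmem : X t ∈ stdSimplex ℝ (Fin n) :=
    resolvent_mem_simplex hn _ (hoff t ht) (hcol t ht) ε hε (X t) heq
  refine ⟨X t, hmem, ?_⟩
  rw [hfix', pi_norm_le_iff_of_nonneg hε.le]
  intro i
  have h0 : 0 ≤ X t i := hmem.1 i
  have h1 : X t i ≤ 1 := by
    rw [← hmem.2]
    exact Finset.single_le_sum (fun j _ => hmem.1 j) (Finset.mem_univ i)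
  have h2 : ε / n ≤ ε := div_le_self hε.le (by exact_mod_cast hn)
  have h3 : 0 ≤ ε / n := by positivity
  have := heq i
  rw [Real.norm_eq_abs, abs_le]
  constructor <;> nlinarith

/-- Equilibrium of the leader-dependent polytopic generator dynamics: if
`M₀ + q(M₁ − M₀)` is a generator matrix (nonnegative off-diagonal entries, zero
column sums) for every `q ∈ [0,1]`, and `q : ℝⁿ → [0,1]` is continuous, then
there exists `x*` in the standard simplex with `(M₀ + q(x*)(M₁ − M₀)) x* = 0`. -/
theorem exists_equilibrium_polytope
    (n : ℕ) (hn : 0 < n)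
    (M₀ M₁ : Matrix (Fin n) (Fin n) ℝ)
    (hoff : ∀ q ∈ Set.Icc (0 : ℝ) 1, ∀ i j, i ≠ j → 0 ≤ (M₀ + q • (M₁ - M₀)) i j)
    (hcol : ∀ q ∈ Set.Icc (0 : ℝ) 1, ∀ j, ∑ i, (M₀ + q • (M₁ - M₀)) i j = 0)
    (q : (Fin n → ℝ) → ℝ) (hqcont : Continuous q)
    (hq01 : ∀ x, q x ∈ Set.Icc (0 : ℝ) 1) :
    ∃ x ∈ stdSimplex ℝ (Fin n), (M₀ + q x • (M₁ - M₀)).mulVec x = 0 := by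
  have hF : Continuous fun x : Fin n → ℝ => ‖(M₀ + q x • (M₁ - M₀)).mulVec x‖ := by
    refine Continuous.norm (Continuous.matrix_mulVec ?_ continuous_id)
    fun_prop
  obtain ⟨x0, hx0, -⟩ := exists_approx_equilibrium n hn M₀ M₁ hoff hcol q hqcont hq01 1 one_pos
  obtain ⟨x, hx, hmin⟩ := (isCompact_stdSimplex ℝ (Fin n)).exists_isMinOn ⟨x0, hx0⟩ hF.continuousOn
  refine ⟨x, hx, norm_le_zero_iff.mp (le_of_forall_pos_le_add fun ε hε => ?_)⟩
  obtain ⟨y, hy, hyε⟩ := exists_approx_equilibrium n hn M₀ M₁ hoff hcol q hqcont hq01 ε hε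
  have := (isMinOn_iff.mp hmin y hy).trans hyε
  simpa using this
end

section
/- Let M₀, M₁, and P be real n × n matrices with P symmetric positive definite such that M₀ᵀP + P·M₀ and M₁ᵀP + P·M₁ are both negative definite. Then there exists λ > 0 with the following property: for every function q : ℝ → [0,1] and every differentiable z : ℝ → ℝⁿ satisfying z′(t) = (M₀ + q(t)(M₁ − M₀))·z(t) for all t ≥ 0, one has z(t)ᵀP z(t) ≤ e^{−λt} · z(0)ᵀP z(0) for all t ≥ 0. -/
open scoped Matrix

/-- Compactness: a negative definite form is dominated by a negative multiple of `vᵀPv`. -/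
lemma exists_decay_rate (n : ℕ) (P N : Matrix (Fin n) (Fin n) ℝ)
    (hP : ∀ v : Fin n → ℝ, v ≠ 0 → 0 < v ⬝ᵥ P.mulVec v)
    (hN : ∀ v : Fin n → ℝ, v ≠ 0 → v ⬝ᵥ N.mulVec v < 0) :
    ∃ c : ℝ, 0 < c ∧ ∀ v : Fin n → ℝ, v ⬝ᵥ N.mulVec v ≤ -c * (v ⬝ᵥ P.mulVec v) := by
  have hcont : ∀ Q : Matrix (Fin n) (Fin n) ℝ, Continuous fun v : Fin n → ℝ => v ⬝ᵥ Q.mulVec v := by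
    intro Q
    exact Continuous.dotProduct continuous_id (Continuous.matrix_mulVec continuous_const continuous_id)
  have hne : ∀ v ∈ Metric.sphere (0 : Fin n → ℝ) 1, v ≠ 0 := by
    rintro v hv rfl
    simp at hv
  have hscale : ∀ v : Fin n → ℝ, v ≠ 0 → ‖v‖⁻¹ • v ∈ Metric.sphere (0 : Fin n → ℝ) 1 := by
    intro v hv
    have : ‖v‖ ≠ 0 := norm_ne_zero_iff.mpr hv
    simp [norm_smul, this]
  rcases (Metric.sphere (0 : Fin n → ℝ) 1).eq_empty_or_nonempty with he | hs
  · refine ⟨1, one_pos, fun v => ?_⟩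
    by_cases hv : v = 0
    · simp [hv]
    · have := hscale v hv
      rw [he] at this
      exact this.elim
  · obtain ⟨x, hx, hmax⟩ := (isCompact_sphere (0 : Fin n → ℝ) 1).exists_isMaxOn hs
      (f := fun v => (v ⬝ᵥ N.mulVec v) / (v ⬝ᵥ P.mulVec v))
      ((hcont N).continuousOn.div (hcont P).continuousOn fun v hv => (hP v (hne v hv)).ne')
    refine ⟨-((x ⬝ᵥ N.mulVec x) / (x ⬝ᵥ P.mulVec x)),
      neg_pos.mpr (div_neg_of_neg_of_pos (hN x (hne x hx)) (hP x (hne x hx))), fun v => ?_⟩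
    by_cases hv : v = 0
    · simp [hv]
    · have h := hmax (hscale v hv)
      have hn : ‖v‖⁻¹ ≠ 0 := inv_ne_zero (norm_ne_zero_iff.mpr hv)
      simp only [Set.mem_setOf_eq, Matrix.mulVec_smul, dotProduct_smul, smul_dotProduct,
        smul_eq_mul] at h
      rw [mul_div_mul_left _ _ hn, mul_div_mul_left _ _ hn] at h
      rw [neg_neg]
      exact (div_le_iff₀ (hP v hv)).mp h

lemma hasDerivAt_dotProduct' {n : ℕ} {f g : ℝ → Fin n → ℝ} {f' g' : Fin n → ℝ} {t : ℝ}
    (hf : HasDerivAt f f' t) (hg : HasDerivAt g g' t) :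
    HasDerivAt (fun s => f s ⬝ᵥ g s) (f' ⬝ᵥ g t + f t ⬝ᵥ g') t := by
  simp only [dotProduct, ← Finset.sum_add_distrib]
  exact HasDerivAt.fun_sum fun i _ => (hasDerivAt_pi.mp hf i).mul (hasDerivAt_pi.mp hg i)

lemma hasDerivAt_mulVec' {n : ℕ} (P : Matrix (Fin n) (Fin n) ℝ) {f : ℝ → Fin n → ℝ}
    {f' : Fin n → ℝ} {t : ℝ} (hf : HasDerivAt f f' t) :
    HasDerivAt (fun s => P.mulVec (f s)) (P.mulVec f') t := by
  rw [hasDerivAt_pi]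
  intro i
  have := hasDerivAt_dotProduct' (hasDerivAt_const t (P i)) hf
  simpa [Matrix.mulVec] using this

/-- Global exponential stability via a common quadratic Lyapunov function: if
`P` is symmetric positive definite and `M₀ᵀP + PM₀`, `M₁ᵀP + PM₁` are negative
definite, then there is a decay rate `lam > 0` such that along every trajectory
of the time-varying polytopic system `ż = (M₀ + q(t)(M₁ − M₀)) z`, with
`q(t) ∈ [0,1]`, the Lyapunov function `V(z) = zᵀPz` satisfies
`V(z(t)) ≤ e^{−lam t} V(z(0))` for all `t ≥ 0`. -/
theorem global_exponential_stability_polytope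
    (n : ℕ) (M₀ M₁ P : Matrix (Fin n) (Fin n) ℝ)
    (hPsymm : P.IsSymm)
    (hPpos : ∀ v : Fin n → ℝ, v ≠ 0 → 0 < v ⬝ᵥ P.mulVec v)
    (h0 : ∀ v : Fin n → ℝ, v ≠ 0 → v ⬝ᵥ (M₀ᵀ * P + P * M₀).mulVec v < 0)
    (h1 : ∀ v : Fin n → ℝ, v ≠ 0 → v ⬝ᵥ (M₁ᵀ * P + P * M₁).mulVec v < 0) :
    ∃ lam : ℝ, 0 < lam ∧
      ∀ q : ℝ → ℝ, (∀ t, q t ∈ Set.Icc (0 : ℝ) 1) →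
      ∀ z : ℝ → Fin n → ℝ, Differentiable ℝ z →
      (∀ t, 0 ≤ t → deriv z t = (M₀ + q t • (M₁ - M₀)).mulVec (z t)) →
      ∀ t, 0 ≤ t →
        z t ⬝ᵥ P.mulVec (z t) ≤ Real.exp (-lam * t) * (z 0 ⬝ᵥ P.mulVec (z 0)) := by
  obtain ⟨c₀, hc₀, H0⟩ := exists_decay_rate n P _ hPpos h0
  obtain ⟨c₁, hc₁, H1⟩ := exists_decay_rate n P _ hPpos h1
  refine ⟨min c₀ c₁, lt_min hc₀ hc₁, ?_⟩
  intro q hq z hz hode t ht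
  set lam := min c₀ c₁ with hlam
  have hV0 : ∀ v : Fin n → ℝ, 0 ≤ v ⬝ᵥ P.mulVec v := by
    intro v
    by_cases hv : v = 0
    · simp [hv]
    · exact (hPpos v hv).le
  have hquad : ∀ (M : Matrix (Fin n) (Fin n) ℝ) (v : Fin n → ℝ),
      v ⬝ᵥ (Mᵀ * P + P * M).mulVec v
        = M.mulVec v ⬝ᵥ P.mulVec v + v ⬝ᵥ P.mulVec (M.mulVec v) := by
    intro M v
    rw [Matrix.add_mulVec, dotProduct_add, ← Matrix.mulVec_mulVec, ← Matrix.mulVec_mulVec,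
      Matrix.dotProduct_mulVec v Mᵀ, Matrix.vecMul_transpose]
  have hd : ∀ s, HasDerivAt (fun s => z s ⬝ᵥ P.mulVec (z s))
      (deriv z s ⬝ᵥ P.mulVec (z s) + z s ⬝ᵥ P.mulVec (deriv z s)) s := fun s =>
    hasDerivAt_dotProduct' (hz s).hasDerivAt (hasDerivAt_mulVec' P (hz s).hasDerivAt)
  have hbound : ∀ s, 0 ≤ s → deriv z s ⬝ᵥ P.mulVec (z s) + z s ⬝ᵥ P.mulVec (deriv z s)
      ≤ -lam * (z s ⬝ᵥ P.mulVec (z s)) := by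
    intro s hs
    have a0 := H0 (z s)
    have a1 := H1 (z s)
    rw [hquad] at a0 a1
    have b0 : -c₀ * (z s ⬝ᵥ P.mulVec (z s)) ≤ -lam * (z s ⬝ᵥ P.mulVec (z s)) :=
      mul_le_mul_of_nonneg_right (neg_le_neg (min_le_left _ _)) (hV0 _)
    have b1 : -c₁ * (z s ⬝ᵥ P.mulVec (z s)) ≤ -lam * (z s ⬝ᵥ P.mulVec (z s)) :=
      mul_le_mul_of_nonneg_right (neg_le_neg (min_le_right _ _)) (hV0 _)
    have e0 := mul_le_mul_of_nonneg_left (a0.trans b0) (sub_nonneg.mpr (hq s).2)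
    have e1 := mul_le_mul_of_nonneg_left (a1.trans b1) (hq s).1
    rw [hode s hs]
    simp only [Matrix.add_mulVec, Matrix.smul_mulVec, Matrix.sub_mulVec, Matrix.mulVec_add,
      Matrix.mulVec_smul, Matrix.mulVec_sub, add_dotProduct, dotProduct_add, smul_dotProduct,
      dotProduct_smul, sub_dotProduct, dotProduct_sub, smul_eq_mul]
    linarith
  have hF : ∀ s, HasDerivAt (fun s => Real.exp (lam * s) * (z s ⬝ᵥ P.mulVec (z s)))
      (Real.exp (lam * s) * (lam * 1) * (z s ⬝ᵥ P.mulVec (z s)) + Real.exp (lam * s) *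
        (deriv z s ⬝ᵥ P.mulVec (z s) + z s ⬝ᵥ P.mulVec (deriv z s))) s := fun s =>
    (((hasDerivAt_id s).const_mul lam).exp).mul (hd s)
  have hanti : AntitoneOn (fun s => Real.exp (lam * s) * (z s ⬝ᵥ P.mulVec (z s))) (Set.Ici 0) := by
    apply antitoneOn_of_deriv_nonpos (convex_Ici 0)
    · exact fun s _ => (hF s).continuousAt.continuousWithinAt
    · exact fun s _ => (hF s).differentiableAt.differentiableWithinAt
    · intro s hs
      rw [interior_Ici] at hs
      rw [(hF s).deriv]
      have := mul_le_mul_of_nonneg_left (hbound s (le_of_lt hs)) (Real.exp_pos (lam * s)).le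
      linarith
  have hfin := hanti (Set.mem_Ici.mpr le_rfl) (Set.mem_Ici.mpr ht) ht
  simp only [mul_zero, Real.exp_zero, one_mul] at hfin
  have h2 := mul_le_mul_of_nonneg_left hfin (Real.exp_pos (-lam * t)).le
  rwa [← mul_assoc, ← Real.exp_add, neg_mul, neg_add_cancel, Real.exp_zero, one_mul,
    ← neg_mul] at h2
end

section
/- Let A : ℝⁿ → ℝ^{n×n} be a continuous map such that for every y ∈ ℝⁿ the matrix A(y) has nonnegative off-diagonal entries and each of its columns sums to zero, and let x : ℝ → ℝⁿ be a differentiable function satisfying x′(t) = A(x(t))·x(t) for all t ≥ 0. If x(0) lies in the standard simplex of ℝⁿ, then x(t) lies in the standard simplex for all t ≥ 0. -/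
theorem hasDerivAt_min_sq (s : ℝ) :
    HasDerivAt (fun u : ℝ => (min u 0) ^ 2) (2 * min s 0) s := by
  rcases lt_trichotomy s 0 with h | h | h
  · have h1 : HasDerivAt (fun u : ℝ => u ^ 2) (2 * min s 0) s := by
      rw [min_eq_left h.le]
      simpa using hasDerivAt_pow 2 s
    refine h1.congr_of_eventuallyEq ?_
    filter_upwards [Iio_mem_nhds h] with u hu
    rw [min_eq_left (le_of_lt hu)]
  · subst h
    rw [hasDerivAt_iff_isLittleO]
    have hb : (fun u : ℝ => (min u 0) ^ 2) =O[nhds 0] (fun u : ℝ => u ^ 2) := by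
      refine Asymptotics.IsBigO.of_bound 1 (Filter.Eventually.of_forall fun u => ?_)
      rw [one_mul, Real.norm_of_nonneg (sq_nonneg _), Real.norm_of_nonneg (sq_nonneg _)]
      rcases le_total u 0 with hu | hu
      · rw [min_eq_left hu]
      · rw [min_eq_right hu]; nlinarith
    have hl : (fun u : ℝ => u ^ 2) =o[nhds 0] (fun u : ℝ => u) :=
      Asymptotics.isLittleO_pow_id (by norm_num)
    simpa using hb.trans_isLittleO hl
  · have h1 : HasDerivAt (fun _ : ℝ => (0 : ℝ)) (2 * min s 0) s := by
      rw [min_eq_right h.le]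
      simpa using hasDerivAt_const s (0 : ℝ)
    refine h1.congr_of_eventuallyEq ?_
    filter_upwards [Ioi_mem_nhds h] with u hu
    rw [min_eq_right (le_of_lt hu)]
    simp

/-- Forward invariance of the standard simplex under state-dependent generator
dynamics: if `A` is continuous, and for every `y` the matrix `A(y)` has
nonnegative off-diagonal entries and zero column sums, then any differentiable
solution of `ẋ = A(x)x` (for `t ≥ 0`) starting in the standard simplex stays
in the standard simplex for all `t ≥ 0`. -/
theorem stdSimplex_forward_invariant
    (n : ℕ)
    (A : (Fin n → ℝ) → Matrix (Fin n) (Fin n) ℝ)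
    (hcont : Continuous A)
    (hoff : ∀ y : Fin n → ℝ, ∀ i j, i ≠ j → 0 ≤ A y i j)
    (hcol : ∀ y : Fin n → ℝ, ∀ j, ∑ i, A y i j = 0)
    (x : ℝ → Fin n → ℝ)
    (hdiff : Differentiable ℝ x)
    (hode : ∀ t : ℝ, 0 ≤ t → deriv x t = (A (x t)).mulVec (x t))
    (h0 : x 0 ∈ stdSimplex ℝ (Fin n)) :
    ∀ t : ℝ, 0 ≤ t → x t ∈ stdSimplex ℝ (Fin n) := by
  intro T hT
  have hx : ∀ t, 0 ≤ t → ∀ i, HasDerivAt (fun u => x u i) (∑ j, A (x t) i j * x t j) t := by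
    intro t ht i
    have h1 := (hdiff t).hasDerivAt
    rw [hode t ht] at h1
    exact (hasDerivAt_pi.1 h1) i
  refine ⟨?_, ?_⟩
  · -- nonnegativity
    obtain ⟨M, hM⟩ : ∃ M : ℝ, ∀ t ∈ Set.Icc 0 T, ∀ i j, |A (x t) i j| ≤ M := by
      have hc : Continuous (fun t => ∑ i, ∑ j, |A (x t) i j|) := by
        refine continuous_finsetSum _ fun i _ => continuous_finsetSum _ fun j _ => ?_
        exact ((hcont.comp hdiff.continuous).matrix_elem i j).abs
      obtain ⟨M, hM⟩ := (isCompact_Icc (a := (0 : ℝ)) (b := T)).bddAbove_image hc.continuousOn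
      refine ⟨M, fun t ht i j => le_trans ?_ (hM ⟨t, ht, rfl⟩)⟩
      calc |A (x t) i j| ≤ ∑ j, |A (x t) i j| :=
            Finset.single_le_sum (f := fun j => |A (x t) i j|)
              (fun _ _ => abs_nonneg _) (Finset.mem_univ j)
        _ ≤ _ := Finset.single_le_sum (f := fun i => ∑ j, |A (x t) i j|)
              (fun _ _ => Finset.sum_nonneg fun _ _ => abs_nonneg _) (Finset.mem_univ i)
    set V : ℝ → ℝ := fun t => ∑ i, (min (x t i) 0) ^ 2 with hV
    set K : ℝ := 2 * (M * n) with hK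
    have hVd : ∀ t, 0 ≤ t → HasDerivAt V
        (∑ i, 2 * min (x t i) 0 * ∑ j, A (x t) i j * x t j) t := by
      intro t ht
      exact HasDerivAt.fun_sum fun i _ =>
        HasDerivAt.comp (h₂ := fun u : ℝ => (min u 0) ^ 2) (h := fun u => x u i) t
          (hasDerivAt_min_sq (x t i)) (hx t ht i)
    have hbound : ∀ t ∈ Set.Icc 0 T,
        (∑ i, 2 * min (x t i) 0 * ∑ j, A (x t) i j * x t j) ≤ K * V t := by
      intro t ht
      have h1 : ∀ i j, 2 * min (x t i) 0 * (A (x t) i j * x t j)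
          ≤ M * ((min (x t i) 0) ^ 2 + (min (x t j) 0) ^ 2) := by
        intro i j
        have hm := hM t ht i j
        have hi : min (x t i) 0 ≤ 0 := min_le_right _ _
        have hj : min (x t j) 0 ≤ x t j := min_le_left _ _
        have key : 2 * min (x t i) 0 * (A (x t) i j * x t j)
            ≤ A (x t) i j * (2 * min (x t i) 0 * min (x t j) 0) := by
          by_cases hij : i = j
          · subst hij
            rcases le_total (x t i) 0 with h | h
            · rw [min_eq_left h]; exact le_of_eq (by ring)
            · rw [min_eq_right h]; simp
          · have ha := hoff (x t) i j hij
            have := mul_nonneg (mul_nonneg ha (neg_nonneg.2 hi)) (sub_nonneg.2 hj)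
            nlinarith
        refine key.trans ((le_abs_self _).trans ?_)
        rw [abs_mul]
        refine mul_le_mul hm ?_ (abs_nonneg _) ((abs_nonneg _).trans hm)
        rw [abs_le]
        constructor <;> nlinarith [sq_nonneg (min (x t i) 0 + min (x t j) 0),
          sq_nonneg (min (x t i) 0 - min (x t j) 0)]
      calc (∑ i, 2 * min (x t i) 0 * ∑ j, A (x t) i j * x t j)
          = ∑ i, ∑ j, 2 * min (x t i) 0 * (A (x t) i j * x t j) := by
            simp_rw [Finset.mul_sum]
        _ ≤ ∑ i, ∑ j, M * ((min (x t i) 0) ^ 2 + (min (x t j) 0) ^ 2) :=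
            Finset.sum_le_sum fun i _ => Finset.sum_le_sum fun j _ => h1 i j
        _ = K * V t := by
            simp only [← Finset.mul_sum, Finset.sum_add_distrib, Finset.sum_const,
              Finset.card_univ, Fintype.card_fin, nsmul_eq_mul, hK, hV]
            ring
    have hWd : ∀ t, 0 ≤ t → HasDerivAt (fun t => Real.exp (-K * t) * V t)
        (Real.exp (-K * t) * (-K * 1) * V t + Real.exp (-K * t) *
          (∑ i, 2 * min (x t i) 0 * ∑ j, A (x t) i j * x t j)) t := by
      intro t ht
      exact (((hasDerivAt_id t).const_mul (-K)).exp).mul (hVd t ht)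
    have hanti : AntitoneOn (fun t => Real.exp (-K * t) * V t) (Set.Icc 0 T) := by
      refine antitoneOn_of_deriv_nonpos (convex_Icc 0 T)
        (fun t ht => (hWd t ht.1).continuousAt.continuousWithinAt) ?_ ?_
      · intro t ht
        rw [interior_Icc] at ht
        exact (hWd t ht.1.le).differentiableAt.differentiableWithinAt
      · intro t ht
        rw [interior_Icc] at ht
        rw [(hWd t ht.1.le).deriv]
        have := mul_le_mul_of_nonneg_left (hbound t ⟨ht.1.le, ht.2.le⟩)
          (Real.exp_pos (-K * t)).le
        linarith
    have hV0 : V 0 = 0 := by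
      refine Finset.sum_eq_zero fun i _ => ?_
      rw [min_eq_right (h0.1 i)]; simp
    have hle := hanti (Set.left_mem_Icc.2 hT) (Set.right_mem_Icc.2 hT) hT
    simp only [hV0, mul_zero] at hle
    have hVT : V T ≤ 0 := nonpos_of_mul_nonpos_right hle (Real.exp_pos _)
    intro i
    have h2 : (min (x T i) 0) ^ 2 ≤ V T :=
      Finset.single_le_sum (f := fun i => (min (x T i) 0) ^ 2)
        (fun _ _ => sq_nonneg _) (Finset.mem_univ i)
    have h3 : min (x T i) 0 = 0 := by
      have := le_antisymm (h2.trans hVT) (sq_nonneg _)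
      exact pow_eq_zero_iff (two_ne_zero) |>.1 this
    exact min_eq_right_iff.1 h3
  · -- conservation of the total sum
    have hs : ∀ t, 0 ≤ t → HasDerivAt (fun u => ∑ i, x u i) 0 t := by
      intro t ht
      have h1 : HasDerivAt (fun u => ∑ i, x u i) (∑ i, ∑ j, A (x t) i j * x t j) t :=
        HasDerivAt.fun_sum fun i _ => hx t ht i
      rw [Finset.sum_comm] at h1
      simpa [← Finset.sum_mul, hcol] using h1
    have := constant_of_has_deriv_right_zero (f := fun u => ∑ i, x u i) (a := 0) (b := T)
      (fun t ht => (hs t ht.1).continuousAt.continuousWithinAt)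
      (fun t ht => (hs t ht.1).hasDerivWithinAt) T (Set.right_mem_Icc.2 hT)
    exact this.trans h0.2
end
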